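/- Let s ≥ 2, let ψ : [0,1]^{s-1} → ℝ≥0 be measurable with ψ(z) ≤ L for all z, where 0 < L < ∞, and set C = ∫_{[0,1]^{s-1}} ψ(z) dz > 0, A = {z ∈ [0,1]^s : ψ(z_1,…,z_{s-1}) ≥ L z_s}, and J_t* = ([0,t) × [0,1]) ∩ A for t ∈ [0,1]^{s-1}. Then: (i) λ(A) = C/L; (ii) λ(J_t*) = (1/L) ∫_{[0,t)} ψ(z) dz for every t ∈ [0,1]^{s-1}; and consequently (iii) for any finite point set x_0,…,x_{M−1} ∈ [0,1]^s with N ≥ 1 accepted points (points lying in A), letting y_0,…,y_{N−1} ∈ [0,1]^{s-1} be the projections onto the first s−1 coordinates of the points of {x_0,…,x_{M−1}} lying in A, one has for every t ∈ [0,1]^{s-1}: |(1/N) Σ_{n=0}^{N−1} 1_{[0,t)}(y_n) − (1/C) ∫_{[0,t)} ψ(z) dz| = |(1/N) Σ_{n=0}^{M−1} 1_{J_t*}(x_n) − λ(J_t*)/λ(A)|. -/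

import Mathlib

open MeasureTheory Set

/-- The half-open anchored box `[0,t) = ∏_j [0, t_j)`. -/
def lowerBox {d : ℕ} (t : Fin d → ℝ) : Set (Fin d → ℝ) :=
  {y | ∀ i, 0 ≤ y i ∧ y i < t i}

/-- The region `A = {z ∈ [0,1]^s : ψ(z_1,…,z_{s-1}) ≥ L z_s}` (with `s = d+1`,
the first `d` coordinates modelled by `Fin d → ℝ`, the last one by `ℝ`). -/
def graphRegion {d : ℕ} (ψ : (Fin d → ℝ) → ℝ) (L : ℝ) : Set ((Fin d → ℝ) × ℝ) :=
  {z | z.1 ∈ Icc (0 : Fin d → ℝ) 1 ∧ z.2 ∈ Icc (0 : ℝ) 1 ∧ L * z.2 ≤ ψ z.1}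

/-- The test set `J_t* = ([0,t) × [0,1]) ∩ A`. -/
def Jstar {d : ℕ} (ψ : (Fin d → ℝ) → ℝ) (L : ℝ) (t : Fin d → ℝ) : Set ((Fin d → ℝ) × ℝ) :=
  (lowerBox t ×ˢ Icc (0 : ℝ) 1) ∩ graphRegion ψ L

/-!
The slice of `A` over a point `z` is the interval `[0, ψ z / L]`, so by Tonelli the part of `A` over
a measurable set `B` has measure `(1 / L) ∫_B ψ`, and the factor `1 / L` cancels in the ratio of two
such measures. For the counts, a point lies in `J_t*` exactly when it is accepted and its projection
lies in `[0, t)`.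
-/

/-- The acceptance region over a base set `s` in an arbitrary space: `graphRegion ψ L` is the case
where `s` is the unit cube, and `Jstar ψ L t` the one where `s` is the box `[0, t)`. -/
def acceptanceRegion {α : Type*} (s : Set α) (ψ : α → ℝ) (L : ℝ) : Set (α × ℝ) :=
  {z | z.1 ∈ s ∧ z.2 ∈ Icc (0 : ℝ) 1 ∧ L * z.2 ≤ ψ z.1}

theorem prod_Icc_inter_acceptanceRegion {α : Type*} {s t : Set α} (hts : t ⊆ s) (ψ : α → ℝ)
    (L : ℝ) : (t ×ˢ Icc (0 : ℝ) 1) ∩ acceptanceRegion s ψ L = acceptanceRegion t ψ L := by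
  ext z
  have := @hts z.1
  simp only [acceptanceRegion, mem_inter_iff, mem_prod, mem_ofPred_eq]
  tauto

theorem acceptanceRegion_eq_region_between_cc {α : Type*} {s : Set α} {ψ : α → ℝ} {L : ℝ}
    (hL : 0 < L) (hψL : ∀ z ∈ s, ψ z ≤ L) :
    acceptanceRegion s ψ L = {p | p.1 ∈ s ∧ p.2 ∈ Icc 0 (ψ p.1 / L)} := by
  ext ⟨z, r⟩
  refine and_congr_right fun hz => ?_
  have height_le_one : ψ z / L ≤ 1 := (div_le_one hL).2 (hψL z hz)
  have under_graph_iff : L * r ≤ ψ z ↔ r ≤ ψ z / L := (le_div_iff₀' hL).symm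
  simp only [mem_Icc, under_graph_iff]
  exact ⟨fun h => ⟨h.1.1, h.2⟩, fun h => ⟨⟨h.1, h.2.trans height_le_one⟩, h.2⟩⟩

section Measure

variable {α : Type*} [MeasurableSpace α] {μ : Measure α} [SFinite μ] {s : Set α}

theorem prod_volume_region_between_cc_eq_lintegral {f g : α → ℝ}
    (hf : AEMeasurable f (μ.restrict s)) (hg : AEMeasurable g (μ.restrict s))
    (hs : MeasurableSet s) :
    μ.prod volume {p | p.1 ∈ s ∧ p.2 ∈ Icc (f p.1) (g p.1)}
      = ∫⁻ a in s, ENNReal.ofReal (g a - f a) ∂μ := by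
  set R : Set (α × ℝ) := {p | p.2 ∈ Icc (f p.1) (g p.1)}
  have hR : NullMeasurableSet R ((μ.restrict s).prod volume) := by
    simpa only [mem_univ, true_and] using
      nullMeasurableSet_region_between_cc _ hf hg nullMeasurableSet_univ
  calc μ.prod volume {p | p.1 ∈ s ∧ p.2 ∈ Icc (f p.1) (g p.1)}
      = μ.prod volume (R ∩ s ×ˢ univ) := by
        congr 1
        ext p
        simp [R, and_comm]
    _ = (μ.restrict s).prod volume R := by
        rw [← Measure.restrict_apply' (hs.prod .univ), ← Measure.restrict_prod_eq_prod_univ]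
    _ = ∫⁻ p, R.indicator 1 p ∂(μ.restrict s).prod volume := (lintegral_indicator_one₀ hR).symm
    _ = ∫⁻ a in s, (∫⁻ r, (Icc (f a) (g a)).indicator 1 r) ∂μ :=
        lintegral_prod _ (aemeasurable_const.indicator₀ hR)
    _ = ∫⁻ a in s, ENNReal.ofReal (g a - f a) ∂μ := by
        simp only [lintegral_indicator_one measurableSet_Icc, Real.volume_Icc]

theorem prod_volume_acceptanceRegion {ψ : α → ℝ} {L : ℝ} (hs : MeasurableSet s)
    (hL : 0 < L) (hψ : IntegrableOn ψ s μ) (hψ0 : ∀ z ∈ s, 0 ≤ ψ z) (hψL : ∀ z ∈ s, ψ z ≤ L) :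
    μ.prod volume (acceptanceRegion s ψ L) = ENNReal.ofReal ((1 / L) * ∫ z in s, ψ z ∂μ) := by
  have height_nonneg : 0 ≤ᵐ[μ.restrict s] fun z => ψ z / L :=
    ae_restrict_of_forall_mem hs fun z hz => div_nonneg (hψ0 z hz) hL.le
  calc μ.prod volume (acceptanceRegion s ψ L)
      = ∫⁻ z in s, ENNReal.ofReal (ψ z / L) ∂μ := by
        rw [acceptanceRegion_eq_region_between_cc hL hψL,
          prod_volume_region_between_cc_eq_lintegral aemeasurable_const
            (hψ.aemeasurable.div_const L) hs]
        simp only [sub_zero]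
    _ = ENNReal.ofReal (∫ z in s, ψ z / L ∂μ) :=
        (ofReal_integral_eq_lintegral_ofReal (hψ.div_const L) height_nonneg).symm
    _ = ENNReal.ofReal ((1 / L) * ∫ z in s, ψ z ∂μ) := by
        rw [integral_div, one_div_mul_eq_div]

end Measure

theorem sum_indicator_fst_eq_sum_indicator_acceptanceRegion {α ι κ M : Type*} [Fintype ι]
    [Fintype κ] [AddCommMonoid M] {s t : Set α} (hts : t ⊆ s) {ψ : α → ℝ} {L : ℝ}
    (x : ι → α × ℝ) (e : κ ≃ {i // x i ∈ acceptanceRegion s ψ L}) (w : α → M) :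
    ∑ k, t.indicator w (x (e k)).1
      = ∑ i, (acceptanceRegion t ψ L).indicator (fun z => w z.1) (x i) := by
  classical
  refine Fintype.sum_of_injective (fun k => (e k : ι)) (Subtype.val_injective.comp e.injective)
    _ _ (fun i rejected => indicator_of_notMem (fun hi => rejected ?_) _) fun k => ?_
  · exact ⟨e.symm ⟨i, hts hi.1, hi.2⟩, by simp⟩
  · have mem_iff : (x (e k)).1 ∈ t ↔ x (e k) ∈ acceptanceRegion t ψ L :=
      ⟨fun h => ⟨h, (e k).2.2⟩, And.left⟩
    simp only [indicator_apply, mem_iff]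

theorem acceptance_rejection_identities_general {α : Type*} [MeasurableSpace α] {μ : Measure α}
    [SFinite μ] {Ω : Set α} (hΩ : MeasurableSet Ω) {L : ℝ} (hL : 0 < L) {ψ : α → ℝ}
    (hψ0 : ∀ z ∈ Ω, 0 ≤ ψ z) (hψL : ∀ z ∈ Ω, ψ z ≤ L)
    {C : ℝ} (hC : C = ∫ z in Ω, ψ z ∂μ) (hCpos : 0 < C) :
    μ.prod volume (acceptanceRegion Ω ψ L) = ENNReal.ofReal (C / L) ∧
    ∀ B ⊆ Ω, MeasurableSet B →
      μ.prod volume ((B ×ˢ Icc (0 : ℝ) 1) ∩ acceptanceRegion Ω ψ L)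
        = ENNReal.ofReal ((1 / L) * ∫ z in B, ψ z ∂μ) ∧
      ∀ {ι : Type*} [Fintype ι] (x : ι → α × ℝ) {N : ℕ}, 1 ≤ N →
        ∀ (e : Fin N ≃ {i // x i ∈ acceptanceRegion Ω ψ L}) {y : Fin N → α},
          (∀ k, y k = (x (e k)).1) →
          (1 / (N : ℝ)) * ∑ k, B.indicator (fun _ => (1 : ℝ)) (y k)
              - (1 / C) * ∫ z in B, ψ z ∂μ
            = (1 / (N : ℝ)) * ∑ i, ((B ×ˢ Icc (0 : ℝ) 1) ∩
                  acceptanceRegion Ω ψ L).indicator (fun _ => (1 : ℝ)) (x i)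
              - (μ.prod volume ((B ×ˢ Icc (0 : ℝ) 1) ∩ acceptanceRegion Ω ψ L)).toReal
                  / (μ.prod volume (acceptanceRegion Ω ψ L)).toReal := by
  -- The Bochner integral of a non-integrable function is `0`, so `0 < C` forces integrability.
  have hψ : IntegrableOn ψ Ω μ := .of_integral_ne_zero (hC ▸ hCpos.ne')
  have volume_region : μ.prod volume (acceptanceRegion Ω ψ L) = ENNReal.ofReal (C / L) := by
    rw [prod_volume_acceptanceRegion hΩ hL hψ hψ0 hψL, ← hC, one_div_mul_eq_div]
  refine ⟨volume_region, fun B hBΩ hB => ?_⟩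
  rw [prod_Icc_inter_acceptanceRegion hBΩ]
  have volume_test := prod_volume_acceptanceRegion hB hL (hψ.mono_set hBΩ)
    (fun z hz => hψ0 z (hBΩ hz)) fun z hz => hψL z (hBΩ hz)
  refine ⟨volume_test, fun x N _ e y hy => ?_⟩
  have integral_nonneg : 0 ≤ ∫ z in B, ψ z ∂μ :=
    setIntegral_nonneg hB fun z hz => hψ0 z (hBΩ hz)
  simp only [hy]
  rw [sum_indicator_fst_eq_sum_indicator_acceptanceRegion hBΩ x e, volume_region,
    volume_test, ENNReal.toReal_ofReal (by positivity), ENNReal.toReal_ofReal (by positivity)]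
  field_simp

theorem lowerBox_eq_pi_Ico {d : ℕ} (t : Fin d → ℝ) :
    lowerBox t = univ.pi fun i => Ico 0 (t i) := by
  ext y
  simp [lowerBox]

theorem measurableSet_lowerBox {d : ℕ} (t : Fin d → ℝ) : MeasurableSet (lowerBox t) := by
  rw [lowerBox_eq_pi_Ico]
  exact .univ_pi fun _ => measurableSet_Ico

theorem lowerBox_subset_Icc {d : ℕ} {t u : Fin d → ℝ} (htu : t ≤ u) : lowerBox t ⊆ Icc 0 u :=
  fun _ hy => ⟨fun i => (hy i).1, fun i => (hy i).2.le.trans (htu i)⟩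

/-- **Basic identities of the acceptance-rejection sampler** (with `s = d+1`):
(i) `λ(A) = C/L`; (ii) `λ(J_t*) = (1/L)∫_{[0,t)} ψ`; (iii) for any point set
`x_0,…,x_{M-1} ∈ [0,1]^s` with `N ≥ 1` accepted points whose projections onto the first
`s-1` coordinates are `y_0,…,y_{N-1}`, the local discrepancy of the `y`'s with respect to
the target `ψ/C` equals the local discrepancy of the `x`'s with respect to `J_t*`. -/
theorem acceptance_rejection_identities (d : ℕ) (hd : 1 ≤ d)
    (L : ℝ) (hL : 0 < L) (ψ : (Fin d → ℝ) → ℝ) (hmeas : Measurable ψ)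
    (hψ0 : ∀ z ∈ Icc (0 : Fin d → ℝ) 1, 0 ≤ ψ z)
    (hψL : ∀ z ∈ Icc (0 : Fin d → ℝ) 1, ψ z ≤ L)
    (C : ℝ) (hC : C = ∫ z in Icc (0 : Fin d → ℝ) 1, ψ z) (hCpos : 0 < C) :
    volume (graphRegion ψ L) = ENNReal.ofReal (C / L) ∧
    (∀ t ∈ Icc (0 : Fin d → ℝ) 1,
      volume (Jstar ψ L t) = ENNReal.ofReal ((1 / L) * ∫ z in lowerBox t, ψ z)) ∧
    (∀ (M : ℕ) (x : Fin M → (Fin d → ℝ) × ℝ),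
      (∀ n, x n ∈ (Icc (0 : Fin d → ℝ) 1) ×ˢ (Icc (0 : ℝ) 1)) →
      ∀ (N : ℕ), 1 ≤ N → N = Nat.card {n : Fin M // x n ∈ graphRegion ψ L} →
      ∀ (y : Fin N → (Fin d → ℝ)) (e : Fin N ≃ {n : Fin M // x n ∈ graphRegion ψ L}),
        (∀ k, y k = (x (e k)).1) →
        ∀ t ∈ Icc (0 : Fin d → ℝ) 1,
          |(1 / (N : ℝ)) * ∑ k, (lowerBox t).indicator (fun _ => (1 : ℝ)) (y k)
              - (1 / C) * ∫ z in lowerBox t, ψ z|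
            = |(1 / (N : ℝ)) * ∑ n, (Jstar ψ L t).indicator (fun _ => (1 : ℝ)) (x n)
              - (volume (Jstar ψ L t)).toReal / (volume (graphRegion ψ L)).toReal|) := by
  obtain ⟨volume_region, test_set⟩ := acceptance_rejection_identities_general
    (μ := volume) measurableSet_Icc hL hψ0 hψL hC hCpos
  have box t (ht : t ∈ Icc 0 1) :=
    test_set (lowerBox t) (lowerBox_subset_Icc ht.2) (measurableSet_lowerBox t)
  exact ⟨volume_region, fun t ht => (box t ht).1, fun _ x _ _ hN _ _ e hy t ht =>
    congrArg abs ((box t ht).2 x hN e hy)⟩
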